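/- Let K be a UFD of characteristic p > 0 and let d be a nonzero K-derivation of K[x,y] such that d(x) and d(y) are coprime. If there exists f ∈ K[x,y] \ K[x^p,y^p] such that d(f) = 0 and d(f̄) = 0, where f̄ = gcd(∂f/∂x, ∂f/∂y), then the divergence of d is zero: d* = 0. -/

import Mathlib

/-!
Let `J = (∂f/∂x) ∂/∂y - (∂f/∂y) ∂/∂x`, which has divergence zero because the second partial
derivatives of `f` commute. Both `(d x, d y)` and the partial derivatives of `f` divided by their
gcd `g` are coprime pairs, and `d f = 0` makes the first orthogonal to the second. Hence they agree
up to a quarter turn and a unit of `K[x, y]`, which is a constant: `g d = u J` with `u ∈ K`. Taking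
divergences, `g d* + d g = u J* = 0`; so `d* = 0` when `d g = 0` and `g ≠ 0`.
-/

open MvPolynomial

section Divisibility

variable {M : Type*} [CommMonoidWithZero M] [IsCancelMulZero M]

lemma isRelPrime_of_forall_dvd_mul {g a b : M} (hg : g ≠ 0)
    (h : ∀ q, q ∣ g * a → q ∣ g * b → q ∣ g) : IsRelPrime a b := by
  intro q hqa hqb
  have hgq : g * q ∣ g * 1 := by
    simpa only [mul_one] using h (g * q) (mul_dvd_mul_left g hqa) (mul_dvd_mul_left g hqb)
  exact isUnit_of_dvd_one ((mul_dvd_mul_iff_left hg).1 hgq)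

lemma exists_unit_mul_eq_of_isRelPrime [DecompositionMonoid M] {a b P Q : M}
    (hPQ : IsRelPrime P Q) (hab : IsRelPrime a b) (h : P * b = Q * a) :
    ∃ u : Mˣ, P = u * a ∧ Q = u * b := by
  by_cases ha : a = 0
  · subst ha
    obtain ⟨v, rfl⟩ : IsUnit b := isRelPrime_zero_left.1 hab
    obtain rfl : P = 0 := v.mul_left_eq_zero.1 (by rw [h, mul_zero])
    obtain ⟨w, rfl⟩ : IsUnit Q := isRelPrime_zero_left.1 hPQ
    exact ⟨w * v⁻¹, by simp, by simp⟩
  · have haP : a ∣ P := hab.dvd_of_dvd_mul_right (h ▸ dvd_mul_left a Q)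
    have hPa : P ∣ a := hPQ.dvd_of_dvd_mul_left (h ▸ dvd_mul_right P b)
    obtain ⟨u, rfl⟩ : Associated a P := associated_of_dvd_dvd haP hPa
    refine ⟨u, mul_comm _ _, mul_right_cancel₀ ha ?_⟩
    rw [← h, mul_comm a, mul_right_comm]

end Divisibility

section PartialDerivatives

variable {σ K : Type*}

lemma dvd_of_mem_support_of_pderiv_eq_zero [CommSemiring K] [NoZeroDivisors K] (p : ℕ) [CharP K p]
    {f : MvPolynomial σ K} {i : σ} (hf : pderiv i f = 0) {m : σ →₀ ℕ} (hm : m ∈ f.support) :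
    p ∣ m i := by
  by_cases hmi : m i = 0
  · simp [hmi]
  obtain ⟨n, rfl⟩ : ∃ n, m = n + Finsupp.single i 1 :=
    ⟨_, (tsub_add_cancel_of_le (Finsupp.single_le_iff.2 (Nat.one_le_iff_ne_zero.2 hmi))).symm⟩
  have hcoeff : coeff (n + Finsupp.single i 1) f * (n i + 1) = 0 := by
    rw [← coeff_pderiv, hf, coeff_zero]
  rw [← CharP.cast_eq_zero_iff K p]
  simpa using (mul_eq_zero.1 hcoeff).resolve_left (mem_support_iff.1 hm)

lemma mem_adjoin_range_X_pow_of_pderiv_eq_zero [CommSemiring K] [NoZeroDivisors K] (p : ℕ)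
    [CharP K p] {f : MvPolynomial σ K} (hf : ∀ i, pderiv i f = 0) :
    f ∈ Algebra.adjoin K (Set.range fun i ↦ (X i : MvPolynomial σ K) ^ p) := by
  rw [f.as_sum]
  refine Subalgebra.sum_mem _ fun m hm ↦ ?_
  rw [monomial_eq]
  refine mul_mem (Subalgebra.algebraMap_mem _ _) (Subalgebra.prod_mem _ fun i _ ↦ ?_)
  obtain ⟨k, hk⟩ := dvd_of_mem_support_of_pderiv_eq_zero p (hf i) hm
  simp only [hk, pow_mul]
  exact pow_mem (Algebra.subset_adjoin (Set.mem_range_self i)) k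

lemma mem_adjoin_pair_X_pow_of_pderiv_eq_zero [CommSemiring K] [NoZeroDivisors K] (p : ℕ)
    [CharP K p] {f : MvPolynomial (Fin 2) K} (h₀ : pderiv 0 f = 0) (h₁ : pderiv 1 f = 0) :
    f ∈ Algebra.adjoin K ({X 0 ^ p, X 1 ^ p} : Set (MvPolynomial (Fin 2) K)) := by
  refine Algebra.adjoin_mono (Set.range_subset_iff.2 <| Fin.forall_fin_two.2 ⟨?_, ?_⟩)
    (mem_adjoin_range_X_pow_of_pderiv_eq_zero p (Fin.forall_fin_two.2 ⟨h₀, h₁⟩)) <;> simp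

lemma pderiv_pderiv_comm [CommRing K] (i j : σ) (f : MvPolynomial σ K) :
    pderiv i (pderiv j f) = pderiv j (pderiv i f) := by
  classical
  -- The commutator of two derivations is a derivation, and this one kills the variables.
  have hcomm : ⁅pderiv (R := K) i, pderiv (R := K) j⁆ = 0 := derivation_ext fun k ↦ by
    simp [Derivation.commutator_apply, pderiv_X, Pi.single_apply, apply_ite]
  rw [← sub_eq_zero, ← Derivation.commutator_apply, hcomm, Derivation.zero_apply]

lemma derivation_apply_eq_sum_pderiv [CommSemiring K] [Fintype σ] {A : Type*} [AddCommMonoid A]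
    [Module K A] [Module (MvPolynomial σ K) A] [IsScalarTower K (MvPolynomial σ K) A]
    (d : Derivation K (MvPolynomial σ K) A) (h : MvPolynomial σ K) :
    d h = ∑ i, pderiv i h • d (X i) := by
  classical
  let D (i : σ) : Derivation K (MvPolynomial σ K) A :=
    (LinearMap.toSpanSingleton _ A (d (X i))).compDer (pderiv i)
  have hD (q : MvPolynomial σ K) : (∑ i, D i) q = ∑ i, pderiv i q • d (X i) := by
    rw [← Derivation.coeFnAddMonoidHom_apply, map_sum, Finset.sum_apply]
    rfl
  have hd : d = ∑ i, D i := derivation_ext fun j ↦ by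
    simp [hD, pderiv_X, Pi.single_apply]
  exact (DFunLike.congr_fun hd h).trans (hD h)

end PartialDerivatives

section Divergence

variable {σ K : Type*} [CommSemiring K] [Fintype σ]

/-- The divergence `d* = ∑ i, ∂(d xᵢ)/∂xᵢ` of a derivation `d` of a polynomial ring. -/
noncomputable def divergence (d : Derivation K (MvPolynomial σ K) (MvPolynomial σ K)) :
    MvPolynomial σ K :=
  ∑ i, pderiv i (d (X i))

lemma divergence_smul (h : MvPolynomial σ K)
    (d : Derivation K (MvPolynomial σ K) (MvPolynomial σ K)) :
    divergence (h • d) = h * divergence d + d h := by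
  rw [derivation_apply_eq_sum_pderiv d h]
  simp only [divergence, Derivation.smul_apply, smul_eq_mul, pderiv_mul, Finset.sum_add_distrib,
    Finset.mul_sum]
  ring

end Divergence

section Jacobian

variable {K : Type*} [CommRing K]

/-- The Jacobian derivation `h ↦ ∂(f, h)/∂(x, y)` of `K[x, y]`, that is, the Hamiltonian vector
field of `f` up to the usual choice of sign. -/
noncomputable def jacobianDerivation (f : MvPolynomial (Fin 2) K) :
    Derivation K (MvPolynomial (Fin 2) K) (MvPolynomial (Fin 2) K) :=
  pderiv 0 f • pderiv 1 - pderiv 1 f • pderiv 0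

lemma jacobianDerivation_X_zero (f : MvPolynomial (Fin 2) K) :
    jacobianDerivation f (X 0) = -pderiv 1 f := by
  simp [jacobianDerivation, pderiv_X]

lemma jacobianDerivation_X_one (f : MvPolynomial (Fin 2) K) :
    jacobianDerivation f (X 1) = pderiv 0 f := by
  simp [jacobianDerivation, pderiv_X]

lemma divergence_jacobianDerivation (f : MvPolynomial (Fin 2) K) :
    divergence (jacobianDerivation f) = 0 := by
  rw [divergence, Fin.sum_univ_two, jacobianDerivation_X_zero, jacobianDerivation_X_one, map_neg,
    pderiv_pderiv_comm 1 0, neg_add_cancel]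

variable [IsDomain K] [DecompositionMonoid (MvPolynomial (Fin 2) K)]
  {d : Derivation K (MvPolynomial (Fin 2) K) (MvPolynomial (Fin 2) K)}
  {f g : MvPolynomial (Fin 2) K}

lemma exists_smul_eq_C_smul_jacobianDerivation (hcop : IsRelPrime (d (X 0)) (d (X 1)))
    (hdf : d f = 0) (hg : g ≠ 0) (hg₀ : g ∣ pderiv 0 f) (hg₁ : g ∣ pderiv 1 f)
    (hgcd : ∀ q, q ∣ pderiv 0 f → q ∣ pderiv 1 f → q ∣ g) :
    ∃ u : K, g • d = (C u : MvPolynomial (Fin 2) K) • jacobianDerivation f := by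
  obtain ⟨a, ha⟩ := hg₀
  obtain ⟨b, hb⟩ := hg₁
  have hab : IsRelPrime a b := isRelPrime_of_forall_dvd_mul hg (by rwa [ha, hb] at hgcd)
  have horth : d (X 0) * a = d (X 1) * -b := by
    rw [derivation_apply_eq_sum_pderiv, Fin.sum_univ_two, ha, hb] at hdf
    simp only [smul_eq_mul] at hdf
    exact mul_left_cancel₀ hg (by linear_combination hdf)
  obtain ⟨v, hv₀, hv₁⟩ := exists_unit_mul_eq_of_isRelPrime hcop hab.symm.neg_left horth
  obtain ⟨u, -, hu⟩ := isUnit_iff_eq_C_of_isReduced.1 v.isUnit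
  refine ⟨u, derivation_ext <| Fin.forall_fin_two.2 ⟨?_, ?_⟩⟩
  · rw [Derivation.smul_apply, Derivation.smul_apply, jacobianDerivation_X_zero, hv₀, hu, hb]
    simp only [smul_eq_mul]
    ring
  · rw [Derivation.smul_apply, Derivation.smul_apply, jacobianDerivation_X_one, hv₁, hu, ha]
    simp only [smul_eq_mul]
    ring

theorem theorem2_4_implies_zero_divergence_general (hcop : IsRelPrime (d (X 0)) (d (X 1)))
    (hdf : d f = 0) (hg : g ≠ 0) (hg₀ : g ∣ pderiv 0 f) (hg₁ : g ∣ pderiv 1 f)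
    (hgcd : ∀ q, q ∣ pderiv 0 f → q ∣ pderiv 1 f → q ∣ g) (hdg : d g = 0) :
    divergence d = 0 := by
  obtain ⟨u, hu⟩ := exists_smul_eq_C_smul_jacobianDerivation hcop hdf hg hg₀ hg₁ hgcd
  have hmul : g * divergence d = 0 :=
    calc g * divergence d = divergence (g • d) := by rw [divergence_smul, hdg, add_zero]
      _ = divergence ((C u : MvPolynomial (Fin 2) K) • jacobianDerivation f) := by rw [hu]
      _ = 0 := by rw [divergence_smul, divergence_jacobianDerivation, derivation_C, mul_zero,
        add_zero]
  exact (mul_eq_zero.1 hmul).resolve_left hg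

end Jacobian

/-- (4) ⇒ (3, divergence part) of Theorem 2.  `K` a UFD of
characteristic `p > 0`, `d` a nonzero `K`-derivation of `K[x,y]` with
`d(x), d(y)` coprime.  If `d(f) = 0` and `d(f̄) = 0` for some
`f ∈ K[x,y] \ K[x^p,y^p]`, where `f̄ = gcd(∂f/∂x, ∂f/∂y)`, then `d* = 0`. -/
theorem theorem2_4_implies_zero_divergence
    {K : Type*} [CommRing K] [IsDomain K] [UniqueFactorizationMonoid K]
    (p : ℕ) [Fact p.Prime] [CharP K p]
    (d : Derivation K (MvPolynomial (Fin 2) K) (MvPolynomial (Fin 2) K))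
    (hd : d ≠ 0)
    (hcop : ∀ q : MvPolynomial (Fin 2) K, q ∣ d (X 0) → q ∣ d (X 1) → IsUnit q)
    (f fbar : MvPolynomial (Fin 2) K)
    (hf : f ∉ Algebra.adjoin K ({X 0 ^ p, X 1 ^ p} : Set (MvPolynomial (Fin 2) K)))
    (hdf : d f = 0)
    (hfbar₁ : fbar ∣ pderiv (0 : Fin 2) f)
    (hfbar₂ : fbar ∣ pderiv (1 : Fin 2) f)
    (hfbar₃ : ∀ q : MvPolynomial (Fin 2) K,
      q ∣ pderiv (0 : Fin 2) f → q ∣ pderiv (1 : Fin 2) f → q ∣ fbar)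
    (hdfbar : d fbar = 0) :
    pderiv (0 : Fin 2) (d (X 0)) + pderiv (1 : Fin 2) (d (X 1)) = 0 := by
  have hfbar : fbar ≠ 0 := by
    rintro rfl
    exact hf (mem_adjoin_pair_X_pow_of_pderiv_eq_zero p
      (zero_dvd_iff.1 hfbar₁) (zero_dvd_iff.1 hfbar₂))
  simpa only [divergence, Fin.sum_univ_two] using theorem2_4_implies_zero_divergence_general
    (fun q ↦ hcop q) hdf hfbar hfbar₁ hfbar₂ hfbar₃ hdfbar
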